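/- arXiv:1003.5368 — 2 statements merged into one kernel-verified Lean document; each statement's English description precedes it below -/
import Mathlib

section
/- For all 0 ≤ h, i, j ≤ d, the restriction of E*_{r+i} A^h E*_{r+j} to W is zero if h < |i−j| and is nonzero if h = |i−j|; likewise, the restriction of E_{t+i} (A*)^h E_{t+j} to W is zero if h < |i−j| and is nonzero if h = |i−j|. -/
open Matrix
open scoped Classical

noncomputable section

/-- The full setup: a `Q`-polynomial distance-regular graph `Γ = (X,R)` of diameter `D ≥ 3`,
with adjacency matrix `A`, primitive idempotents `E_i`, eigenvalues `θ_i`,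
Krein parameters `q^h_{ij}`, a fixed base vertex `x`, dual primitive idempotents `E*_i`,
dual adjacency matrix `A*` and dual eigenvalues `θ*_i`. -/
structure TSetup (X : Type*) [Fintype X] [DecidableEq X] where
  G : SimpleGraph X
  hGconn : G.Connected
  D : ℕ
  hD3 : 3 ≤ D
  hDiamLe : ∀ y z : X, G.dist y z ≤ D
  hDiamEq : ∃ y z : X, G.dist y z = D
  p : ℕ → ℕ → ℕ → ℕ
  hDRG : ∀ h i j : ℕ, h ≤ D → i ≤ D → j ≤ D → ∀ y z : X, G.dist y z = h →
    Nat.card {w : X // G.dist y w = i ∧ G.dist z w = j} = p h i j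
  A : Matrix X X ℂ
  hA : ∀ y z : X, A y z = if G.Adj y z then 1 else 0
  E : ℕ → Matrix X X ℂ
  hEzero : ∀ i : ℕ, D < i → E i = 0
  hEsum : ∑ i ∈ Finset.range (D + 1), E i = 1
  hEidem : ∀ i j : ℕ, i ≤ D → j ≤ D → E i * E j = if i = j then E i else 0
  hEsymm : ∀ i : ℕ, (E i)ᵀ = E i
  hEreal : ∀ i : ℕ, (E i).map (starRingEnd ℂ) = E i
  hE0 : E 0 = (Fintype.card X : ℂ)⁻¹ • Matrix.of (fun _ _ => (1 : ℂ))
  θ : ℕ → ℝ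
  hθinj : ∀ i j : ℕ, i ≤ D → j ≤ D → θ i = θ j → i = j
  hAspec : A = ∑ i ∈ Finset.range (D + 1), (θ i : ℂ) • E i
  q : ℕ → ℕ → ℕ → ℝ
  hKrein : ∀ i j : ℕ, i ≤ D → j ≤ D →
    Matrix.hadamard (E i) (E j) =
      (Fintype.card X : ℂ)⁻¹ • ∑ h ∈ Finset.range (D + 1), (q h i j : ℂ) • E h
  hQpoly0 : ∀ h i j : ℕ, h ≤ D → i ≤ D → j ≤ D →
    (i + j < h ∨ h + j < i ∨ h + i < j) → q h i j = 0
  hQpoly1 : ∀ h i j : ℕ, h ≤ D → i ≤ D → j ≤ D →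
    (h = i + j ∨ i = h + j ∨ j = h + i) → q h i j ≠ 0
  x : X
  Estar : ℕ → Matrix X X ℂ
  hEstarzero : ∀ i : ℕ, D < i → Estar i = 0
  hEstar : ∀ i : ℕ, i ≤ D → ∀ y z : X,
    Estar i y z = if y = z ∧ G.dist x y = i then 1 else 0
  Astar : Matrix X X ℂ
  hAstar : ∀ y z : X, Astar y z = if y = z then (Fintype.card X : ℂ) * E 1 x y else 0
  θstar : ℕ → ℝ
  hθstarinj : ∀ i j : ℕ, i ≤ D → j ≤ D → θstar i = θstar j → i = j
  hAstarspec : Astar = ∑ i ∈ Finset.range (D + 1), (θstar i : ℂ) • Estar i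

variable {X : Type*} [Fintype X] [DecidableEq X]

/-- The Terwilliger algebra `T = T(x)`, generated by `A` and `A*`. -/
def TSetup.T (S : TSetup X) : Subalgebra ℂ (Matrix X X ℂ) :=
  Algebra.adjoin ℂ {S.A, S.Astar}

/-- A thin irreducible `T`-module `W` with endpoint `r`, dual endpoint `t` and diameter `d`,
where `E*_i W ≠ 0` iff `r ≤ i ≤ r + d` and `E_i W ≠ 0` iff `t ≤ i ≤ t + d`. -/
structure TMod (S : TSetup X) where
  W : Submodule ℂ (X → ℂ)
  hWinv : ∀ B ∈ S.T, ∀ w ∈ W, B *ᵥ w ∈ W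
  hWne : W ≠ ⊥
  hWirr : ∀ U : Submodule ℂ (X → ℂ), U ≤ W →
    (∀ B ∈ S.T, ∀ w ∈ U, B *ᵥ w ∈ U) → U = ⊥ ∨ U = W
  hthin : ∀ i : ℕ, Module.finrank ℂ (W.map (S.Estar i).mulVecLin) ≤ 1
  r : ℕ
  t : ℕ
  d : ℕ
  hr : ∀ i : ℕ, W.map (S.Estar i).mulVecLin ≠ ⊥ ↔ r ≤ i ∧ i ≤ r + d
  ht : ∀ i : ℕ, W.map (S.E i).mulVecLin ≠ ⊥ ↔ t ≤ i ∧ i ≤ t + d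

open Classical in
/-- The action of a matrix `B` on `W` (the restriction of `B` to `W`; defined to be `0`
if `B` does not leave `W` invariant). -/
def actW (S : TSetup X) (M : TMod S) (B : Matrix X X ℂ) : M.W →ₗ[ℂ] M.W :=
  if h : ∀ w ∈ M.W, B.mulVecLin w ∈ M.W then B.mulVecLin.restrict h else 0

/-- `tr_W(B)`: the trace of the action of `B` on `W`. -/
def trW (S : TSetup X) (M : TMod S) (B : Matrix X X ℂ) : ℂ :=
  LinearMap.trace ℂ M.W (actW S M B)

/-- `a_i(W) = tr_W(E*_{r+i} A)`. -/
def aW (S : TSetup X) (M : TMod S) (i : ℕ) : ℂ :=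
  trW S M (S.Estar (M.r + i) * S.A)

/-- `x_i(W) = tr_W(E*_{r+i} A E*_{r+i-1} A)`, with `x_0(W) = 0`. -/
def xW (S : TSetup X) (M : TMod S) (i : ℕ) : ℂ :=
  if i = 0 then 0 else trW S M (S.Estar (M.r + i) * S.A * S.Estar (M.r + i - 1) * S.A)

/-- `a*_i(W) = tr_W(E_{t+i} A*)`. -/
def astarW (S : TSetup X) (M : TMod S) (i : ℕ) : ℂ :=
  trW S M (S.E (M.t + i) * S.Astar)

/-- `x*_i(W) = tr_W(E_{t+i} A* E_{t+i-1} A*)`, with `x*_0(W) = 0`. -/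
def xstarW (S : TSetup X) (M : TMod S) (i : ℕ) : ℂ :=
  if i = 0 then 0 else trW S M (S.E (M.t + i) * S.Astar * S.E (M.t + i - 1) * S.Astar)

/-- The polynomials `p_i`: `p_0 = 1`, `p_{-1} = 0`,
`λ p_i = p_{i+1} + a_i(W) p_i + x_i(W) p_{i-1}`. -/
def pW (S : TSetup X) (M : TMod S) : ℕ → Polynomial ℂ
  | 0 => 1
  | 1 => Polynomial.X - Polynomial.C (aW S M 0)
  | (n + 2) =>
      (Polynomial.X - Polynomial.C (aW S M (n + 1))) * pW S M (n + 1)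
        - Polynomial.C (xW S M (n + 1)) * pW S M n

/-- The polynomials `p*_i`: `p*_0 = 1`, `p*_{-1} = 0`,
`λ p*_i = p*_{i+1} + a*_i(W) p*_i + x*_i(W) p*_{i-1}`. -/
def pstarW (S : TSetup X) (M : TMod S) : ℕ → Polynomial ℂ
  | 0 => 1
  | 1 => Polynomial.X - Polynomial.C (astarW S M 0)
  | (n + 2) =>
      (Polynomial.X - Polynomial.C (astarW S M (n + 1))) * pstarW S M (n + 1)
        - Polynomial.C (xstarW S M (n + 1)) * pstarW S M n

/-- The Hermitian inner product `⟨u,v⟩ = Σ_y u_y conj(v_y)` on `ℂ^X`. -/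
def herm (u v : X → ℂ) : ℂ := ∑ y, u y * (starRingEnd ℂ) (v y)

/-- `ν(W)`, the multiplicative inverse of `m_0(W) = tr_W(E_t E*_r)`. -/
def nuW (S : TSetup X) (M : TMod S) : ℂ :=
  (trW S M (S.E M.t * S.Estar M.r))⁻¹

/-- `k_i(W) = ν(W) m*_i(W)` where `m*_i(W) = tr_W(E*_{r+i} E_t)`. -/
def kW (S : TSetup X) (M : TMod S) (i : ℕ) : ℂ :=
  nuW S M * trW S M (S.Estar (M.r + i) * S.E M.t)

/-- `k*_i(W) = ν(W) m_i(W)` where `m_i(W) = tr_W(E_{t+i} E*_r)`. -/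
def kstarW (S : TSetup X) (M : TMod S) (i : ℕ) : ℂ :=
  nuW S M * trW S M (S.E (M.t + i) * S.Estar M.r)

/-- Abstract tridiagonal system: orthogonal idempotents `P` with sum `1`, and an operator `A`
acting tridiagonally on them, irreducibly. -/
structure TriSys {V : Type*} [AddCommGroup V] [Module ℂ V] (D lo d : ℕ)
    (P : ℕ → Module.End ℂ V) (A : Module.End ℂ V) : Prop where
  sum : ∑ i ∈ Finset.range (D + 1), P i = 1
  idem : ∀ i j, P i * P j = if i = j then P i else 0
  ne : ∀ i, P i ≠ 0 ↔ lo ≤ i ∧ i ≤ lo + d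
  tri : ∀ i j, (i + 1 < j ∨ j + 1 < i) → P i * A * P j = 0
  irr : ∀ U : Submodule ℂ V, (∀ w ∈ U, A w ∈ U) → (∀ i, ∀ w ∈ U, P i w ∈ U) → U = ⊥ ∨ U = ⊤

section tri

variable {V : Type*} [AddCommGroup V] [Module ℂ V] {D lo d : ℕ}
    {P : ℕ → Module.End ℂ V} {A : Module.End ℂ V}

theorem TriSys.insert (H : TriSys D lo d P A) (B C : Module.End ℂ V) :
    B * C = ∑ k ∈ Finset.range (D + 1), B * P k * C := by
  have h : B * C = B * 1 * C := by rw [mul_one]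
  rw [h, ← H.sum, Finset.mul_sum, Finset.sum_mul]

theorem TriSys.zero (H : TriSys D lo d P A) (h : ℕ) :
    ∀ i j, (i + h < j ∨ j + h < i) → P i * A ^ h * P j = 0 := by
  induction h with
  | zero =>
    intro i j hij
    rw [pow_zero, mul_one, H.idem, if_neg (by omega)]
  | succ h ih =>
    intro i j hij
    have e : P i * A ^ (h + 1) * P j = (P i * A) * (A ^ h * P j) := by
      rw [pow_succ']; simp only [mul_assoc]
    rw [e, H.insert]
    refine Finset.sum_eq_zero fun k _ => ?_
    by_cases hk : i + 1 < k ∨ k + 1 < i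
    · rw [H.tri _ _ hk, zero_mul]
    · have e2 : P i * A * P k * (A ^ h * P j) = P i * A * (P k * A ^ h * P j) := by
        simp only [mul_assoc]
      rw [e2, ih k j (by omega), mul_zero]

theorem rank_one_comp {P B C : Module.End ℂ V} [FiniteDimensional ℂ V]
    (hr : Module.finrank ℂ (LinearMap.range P) ≤ 1)
    (hB : B * P ≠ 0) (hC : P * C ≠ 0) : B * (P * C) ≠ 0 := by
  intro h0
  apply hB
  obtain ⟨c, hc⟩ : ∃ c, (P * C) c ≠ 0 := by
    by_contra hh; push Not at hh
    exact hC (LinearMap.ext hh)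
  obtain ⟨v, hv⟩ := finrank_le_one_iff.mp hr
  obtain ⟨a, ha⟩ := hv ⟨P (C c), LinearMap.mem_range_self _ _⟩
  have ha' : a • (v : V) = P (C c) := congrArg Subtype.val ha
  have ha0 : a ≠ 0 := by
    rintro rfl
    rw [zero_smul] at ha'
    exact hc ha'.symm
  have hBv : B (v : V) = 0 := by
    have h1 : B (P (C c)) = 0 := LinearMap.congr_fun h0 c
    rw [← ha', map_smul] at h1
    exact (smul_eq_zero.mp h1).resolve_left ha0
  ext w
  obtain ⟨b, hb⟩ := hv ⟨P w, LinearMap.mem_range_self _ _⟩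
  have hb' : b • (v : V) = P w := congrArg Subtype.val hb
  change B (P w) = 0
  rw [← hb', map_smul, hBv, smul_zero]

theorem TriSys.split (H : TriSys D lo d P A) (s : Set ℕ)
    (hs : ∀ m ∈ s, ∀ k ∉ s, P m * A * P k = 0) :
    (∀ m ∈ s, P m = 0) ∨ (∀ k ∉ s, P k = 0) := by
  let U : Submodule ℂ V :=
    { carrier := {w | ∀ m ∈ s, P m w = 0}
      zero_mem' := by intro m _; simp
      add_mem' := by intro a b ha hb m hm; rw [map_add, ha m hm, hb m hm, add_zero]
      smul_mem' := by intro c a ha m hm; rw [map_smul, ha m hm, smul_zero] }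
  have hU : ∀ w, w ∈ U ↔ ∀ m ∈ s, P m w = 0 := fun w => Iff.rfl
  have app : ∀ i j w, P i (P j w) = if i = j then P i w else 0 := by
    intro i j w
    have := LinearMap.congr_fun (H.idem i j) w
    rw [Module.End.mul_apply] at this
    rw [this]; split_ifs <;> rfl
  have hh := H.irr U ?_ ?_
  rcases hh with h | h
  · right
    intro k hk
    ext w
    have : P k w ∈ U := by
      rw [hU]; intro m hm
      rw [app, if_neg (by rintro rfl; exact hk hm)]
    rw [h] at this
    simpa using this
  · left
    intro m hm
    ext w
    have : w ∈ U := by rw [h]; trivial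
    exact this m hm
  · intro w hw m hm
    have e : P m (A w) = ∑ k ∈ Finset.range (D + 1), (P m * A * P k) w := by
      have := LinearMap.congr_fun (H.insert (P m * A) 1) w
      simpa using this
    rw [e]
    refine Finset.sum_eq_zero fun k _ => ?_
    by_cases hk : k ∈ s
    · change P m (A (P k w)) = 0
      rw [hw k hk]; simp
    · rw [hs m hm k hk]; rfl
  · intro i w hw m hm
    rw [app]
    split_ifs
    · exact hw m hm
    · rfl

theorem TriSys.up (H : TriSys D lo d P A) (n : ℕ) (h1 : lo ≤ n) (h2 : n < lo + d) :
    P (n + 1) * A * P n ≠ 0 := by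
  intro h0
  have hh := H.split {m | n < m} ?_
  rcases hh with h | h
  · exact (H.ne (n + 1)).2 (by omega) (h _ (by simp))
  · exact (H.ne n).2 (by omega) (h _ (by simp))
  · intro m hm k hk
    simp only [Set.mem_ofPred_eq, not_lt] at hm hk
    by_cases hh : k + 1 < m
    · exact H.tri _ _ (Or.inr hh)
    · obtain rfl : k = n := by omega
      obtain rfl : m = k + 1 := by omega
      exact h0

theorem TriSys.down (H : TriSys D lo d P A) (n : ℕ) (h1 : lo ≤ n) (h2 : n < lo + d) :
    P n * A * P (n + 1) ≠ 0 := by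
  intro h0
  have hh := H.split {m | m ≤ n} ?_
  rcases hh with h | h
  · exact (H.ne n).2 (by omega) (h _ (by simp))
  · exact (H.ne (n + 1)).2 (by omega) (h _ (by simp))
  · intro m hm k hk
    simp only [Set.mem_ofPred_eq, not_le] at hm hk
    by_cases hh : m + 1 < k
    · exact H.tri _ _ (Or.inl hh)
    · obtain rfl : m = n := by omega
      obtain rfl : k = m + 1 := by omega
      exact h0

theorem TriSys.zero_of_gt (H : TriSys D lo d P A) (i : ℕ) (hi : D < i) : P i = 0 := by
  have h := H.insert (P i) 1
  rw [mul_one] at h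
  rw [h]
  refine Finset.sum_eq_zero fun k hk => ?_
  rw [Finset.mem_range] at hk
  rw [H.idem, if_neg (by omega), zero_mul]

theorem TriSys.le (H : TriSys D lo d P A) : lo + d ≤ D := by
  by_contra hh
  exact (H.ne (lo + d)).2 (by omega) (H.zero_of_gt _ (by omega))

theorem TriSys.upPow [FiniteDimensional ℂ V] (H : TriSys D lo d P A)
    (hr : ∀ i, Module.finrank ℂ (LinearMap.range (P i)) ≤ 1) (h j : ℕ)
    (h1 : lo ≤ j) (h2 : j + h ≤ lo + d) : P (j + h) * A ^ h * P j ≠ 0 := by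
  induction h with
  | zero =>
    rw [pow_zero, mul_one, H.idem, add_zero, if_pos rfl]
    exact (H.ne j).2 (by omega)
  | succ h ih =>
    have hD := H.le
    have e : P (j + (h + 1)) * A ^ (h + 1) * P j
        = (P (j + h + 1) * A) * (P (j + h) * (A ^ h * P j)) := by
      have e1 : P (j + (h + 1)) * A ^ (h + 1) * P j = (P (j + h + 1) * A) * (A ^ h * P j) := by
        rw [pow_succ', ← add_assoc]; simp only [mul_assoc]
      rw [e1, H.insert, Finset.sum_eq_single (j + h)]
      · simp only [mul_assoc]
      · intro k _ hk
        by_cases hk2 : k < j + h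
        · rw [H.tri _ _ (Or.inr (by omega)), zero_mul]
        · have e2 := H.zero h k j (by omega)
          rw [mul_assoc] at e2
          rw [mul_assoc _ (P k), e2, mul_zero]
      · intro hk
        rw [Finset.mem_range] at hk
        omega
    rw [e]
    refine rank_one_comp (hr _) (H.up _ (by omega) (by omega)) ?_
    rw [← mul_assoc]
    exact ih (by omega)

theorem TriSys.downPow [FiniteDimensional ℂ V] (H : TriSys D lo d P A)
    (hr : ∀ i, Module.finrank ℂ (LinearMap.range (P i)) ≤ 1) (h : ℕ) : ∀ j : ℕ,
    lo ≤ j → j + h ≤ lo + d → P j * A ^ h * P (j + h) ≠ 0 := by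
  induction h with
  | zero =>
    intro j h1 h2
    rw [pow_zero, mul_one, H.idem, add_zero, if_pos rfl]
    exact (H.ne j).2 (by omega)
  | succ h ih =>
    intro j h1 h2
    have hD := H.le
    have e : P j * A ^ (h + 1) * P (j + (h + 1))
        = (P j * A) * (P (j + 1) * (A ^ h * P (j + 1 + h))) := by
      have e1 : P j * A ^ (h + 1) * P (j + (h + 1)) = (P j * A) * (A ^ h * P (j + 1 + h)) := by
        rw [pow_succ', show j + (h + 1) = j + 1 + h by omega]; simp only [mul_assoc]
      rw [e1, H.insert, Finset.sum_eq_single (j + 1)]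
      · simp only [mul_assoc]
      · intro k _ hk
        by_cases hk2 : j + 1 < k
        · rw [H.tri _ _ (Or.inl (by omega)), zero_mul]
        · have e2 := H.zero h k (j + 1 + h) (by omega)
          rw [mul_assoc] at e2
          rw [mul_assoc _ (P k), e2, mul_zero]
      · intro hk
        rw [Finset.mem_range] at hk
        omega
    rw [e]
    refine rank_one_comp (hr _) (H.down _ (by omega) (by omega)) ?_
    rw [← mul_assoc]
    exact ih (j + 1) (by omega) (by omega)

theorem TriSys.main [FiniteDimensional ℂ V] (H : TriSys D lo d P A)
    (hr : ∀ i, Module.finrank ℂ (LinearMap.range (P i)) ≤ 1) (h i j : ℕ)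
    (hi : i ≤ d) (hj : j ≤ d) :
    (h < Nat.dist i j → P (lo + i) * A ^ h * P (lo + j) = 0) ∧
    (h = Nat.dist i j → P (lo + i) * A ^ h * P (lo + j) ≠ 0) := by
  unfold Nat.dist
  refine ⟨fun hh => H.zero _ _ _ (by omega), fun hh => ?_⟩
  rcases le_total j i with hij | hij
  · have := H.upPow hr h (lo + j) (by omega) (by omega)
    rwa [show lo + j + h = lo + i by omega] at this
  · have := H.downPow hr h (lo + i) (by omega) (by omega)
    rwa [show lo + i + h = lo + j by omega] at this

theorem TriSys.finrank_sum [FiniteDimensional ℂ V] (H : TriSys D lo d P A) :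
    ∑ i ∈ Finset.range (D + 1), Module.finrank ℂ (LinearMap.range (P i))
      = Module.finrank ℂ V := by
  have h : LinearMap.trace ℂ V (∑ i ∈ Finset.range (D + 1), P i) = Module.finrank ℂ V := by
    rw [H.sum, LinearMap.trace_one]
  rw [map_sum] at h
  have h2 : ∀ i, LinearMap.trace ℂ V (P i) = (Module.finrank ℂ (LinearMap.range (P i)) : ℂ) := by
    intro i
    have hid : IsIdempotentElem (P i) := by
      have := H.idem i i
      rwa [if_pos rfl] at this
    exact (LinearMap.IsIdempotentElem.isProj_range _ hid).trace
  simp only [h2] at h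
  exact_mod_cast h

theorem TriSys.finrank_sum' [FiniteDimensional ℂ V] (H : TriSys D lo d P A) :
    ∑ i ∈ Finset.Icc lo (lo + d), Module.finrank ℂ (LinearMap.range (P i))
      = Module.finrank ℂ V := by
  rw [← H.finrank_sum]
  have := H.le
  apply Finset.sum_subset
  · intro k hk
    rw [Finset.mem_Icc] at hk
    rw [Finset.mem_range]; omega
  · intro k _ hk
    rw [Finset.mem_Icc] at hk
    have : P k = 0 := by
      by_contra h0
      exact hk ((H.ne k).1 h0)
    rw [this]
    simp

theorem TriSys.dual_thin [FiniteDimensional ℂ V] {D' lo' : ℕ} {P' : ℕ → Module.End ℂ V}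
    {A' : Module.End ℂ V} (H : TriSys D lo d P A) (H' : TriSys D' lo' d P' A')
    (hr : ∀ i, Module.finrank ℂ (LinearMap.range (P i)) ≤ 1) (i : ℕ) :
    Module.finrank ℂ (LinearMap.range (P' i)) ≤ 1 := by
  by_cases hi : i ∈ Finset.Icc lo' (lo' + d)
  · have h1 : Module.finrank ℂ V ≤ d + 1 := by
      rw [← H.finrank_sum']
      refine (Finset.sum_le_card_nsmul _ _ 1 fun k _ => hr k).trans ?_
      simp
      omega
    rw [← H'.finrank_sum', ← Finset.add_sum_erase _ _ hi] at h1
    have h2 : ((Finset.Icc lo' (lo' + d)).erase i).card • 1 ≤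
        ∑ k ∈ (Finset.Icc lo' (lo' + d)).erase i, Module.finrank ℂ (LinearMap.range (P' k)) := by
      refine Finset.card_nsmul_le_sum _ _ 1 fun k hk => ?_
      rw [Finset.mem_erase, Finset.mem_Icc] at hk
      have h3 := (H'.ne k).2 hk.2
      rw [Nat.one_le_iff_ne_zero]
      intro h4
      rw [Submodule.finrank_eq_zero, LinearMap.range_eq_bot] at h4
      exact h3 h4
    rw [Finset.card_erase_of_mem hi, Nat.card_Icc] at h2
    simp at h2
    omega
  · rw [Finset.mem_Icc] at hi
    have : P' i = 0 := by
      by_contra h0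
      exact hi ((H'.ne i).1 h0)
    rw [this, LinearMap.range_zero, finrank_bot]
    omega

end tri

section setup

/-- Lagrange interpolation: spectral idempotents lie in the algebra generated by the matrix. -/
theorem idem_mem (D : ℕ) (F : ℕ → Matrix X X ℂ) (B : Matrix X X ℂ) (θ : ℕ → ℝ)
    (hsum : ∑ i ∈ Finset.range (D + 1), F i = 1)
    (hidem : ∀ i j, F i * F j = if i = j then F i else 0)
    (hθ : ∀ i j : ℕ, i ≤ D → j ≤ D → θ i = θ j → i = j)
    (hB : B = ∑ i ∈ Finset.range (D + 1), (θ i : ℂ) • F i)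
    (T : Subalgebra ℂ (Matrix X X ℂ)) (hT : B ∈ T) (i : ℕ) (hi : i ≤ D) : F i ∈ T := by
  have hBF : ∀ j ≤ D, B * F j = (θ j : ℂ) • F j := by
    intro j hj
    rw [hB, Finset.sum_mul, Finset.sum_eq_single j]
    · rw [smul_mul_assoc, hidem, if_pos rfl]
    · intro k _ hk
      rw [smul_mul_assoc, hidem, if_neg hk, smul_zero]
    · intro hk
      rw [Finset.mem_range] at hk
      omega
  have hp : ∀ (f : Polynomial ℂ), ∀ j ≤ D, Polynomial.aeval B f * F j
      = (f.eval (θ j : ℂ)) • F j := by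
    intro f j hj
    induction f using Polynomial.induction_on' with
    | add p q hp hq => rw [map_add, add_mul, hp, hq, Polynomial.eval_add, add_smul]
    | monomial n a =>
      rw [Polynomial.aeval_monomial, Polynomial.eval_monomial]
      have : B ^ n * F j = ((θ j : ℂ) ^ n) • F j := by
        induction n with
        | zero => simp
        | succ n ih => rw [pow_succ, mul_assoc, hBF j hj, mul_smul_comm, ih, smul_smul, pow_succ']
      rw [mul_assoc, this, mul_smul_comm, ← Algebra.smul_def, smul_smul, mul_comm]
  let f := Lagrange.basis (Finset.range (D + 1)) (fun j => (θ j : ℂ)) i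
  have hf : Polynomial.aeval B f = F i := by
    have e : Polynomial.aeval B f = Polynomial.aeval B f * ∑ j ∈ Finset.range (D + 1), F j := by
      rw [hsum, mul_one]
    rw [e, Finset.mul_sum, Finset.sum_eq_single i]
    · rw [hp f i hi]
      have := Lagrange.eval_basis_self (s := Finset.range (D + 1)) (v := fun j => (θ j : ℂ))
        (i := i) ?_ ?_
      · rw [this, one_smul]
      · intro a ha b hb hab
        simp only [Finset.coe_range, Set.mem_Iio] at ha hb
        exact hθ a b (by omega) (by omega) (Complex.ofReal_injective hab)
      · simp; omega
    · intro j hj hji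
      rw [hp f j (by rw [Finset.mem_range] at hj; omega)]
      have := Lagrange.eval_basis_of_ne (s := Finset.range (D + 1)) (v := fun j => (θ j : ℂ))
        (Ne.symm hji) hj
      rw [this, zero_smul]
    · intro hk
      rw [Finset.mem_range] at hk
      omega
  rw [← hf]
  exact Algebra.adjoin_le (Set.singleton_subset_iff.2 hT) (Polynomial.aeval_mem_adjoin_singleton ℂ B)

variable (S : TSetup X)

theorem TSetup.E_idem (i j : ℕ) : S.E i * S.E j = if i = j then S.E i else 0 := by
  by_cases hi : i ≤ S.D
  · by_cases hj : j ≤ S.D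
    · exact S.hEidem i j hi hj
    · rw [S.hEzero j (by omega), mul_zero, if_neg (by omega)]
  · rw [S.hEzero i (by omega), zero_mul, ite_self]

theorem TSetup.Estar_eq (i : ℕ) :
    S.Estar i = Matrix.diagonal (fun y => if S.G.dist S.x y = i then (1 : ℂ) else 0) := by
  by_cases hi : i ≤ S.D
  · ext y z
    rw [S.hEstar i hi, Matrix.diagonal_apply]
    by_cases h : y = z <;> simp [h]
  · rw [S.hEstarzero i (by omega)]
    ext y z
    have := S.hDiamLe S.x y
    rw [Matrix.diagonal_apply, if_neg (show ¬ S.G.dist S.x y = i by omega)]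
    simp

theorem TSetup.Estar_idem (i j : ℕ) :
    S.Estar i * S.Estar j = if i = j then S.Estar i else 0 := by
  rw [S.Estar_eq, S.Estar_eq, Matrix.diagonal_mul_diagonal]
  split_ifs with h
  · subst h; congr 1; ext y; split_ifs <;> simp
  · rw [← Matrix.diagonal_zero]; congr 1; ext y
    by_cases h1 : S.G.dist S.x y = i
    · have : S.G.dist S.x y ≠ j := by omega
      simp [this]
    · simp [h1]

theorem TSetup.Estar_sum : ∑ i ∈ Finset.range (S.D + 1), S.Estar i = 1 := by
  ext y z
  rw [Matrix.sum_apply]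
  simp only [S.Estar_eq, Matrix.diagonal_apply, Matrix.one_apply]
  by_cases h : y = z
  · have := S.hDiamLe S.x y
    simp only [h, if_true]
    rw [Finset.sum_ite_eq, if_pos]
    subst h
    rw [Finset.mem_range]; omega
  · simp [h]

theorem TSetup.tri1 (i j : ℕ) (h : i + 1 < j ∨ j + 1 < i) :
    S.Estar i * S.A * S.Estar j = 0 := by
  ext y z
  rw [S.Estar_eq, S.Estar_eq, Matrix.mul_diagonal, Matrix.diagonal_mul, S.hA]
  by_cases hyz : S.G.Adj y z
  · by_cases h1 : S.G.dist S.x y = i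
    · by_cases h2 : S.G.dist S.x z = j
      · exfalso
        have h3 : S.G.dist y z = 1 := SimpleGraph.dist_eq_one_iff_adj.2 hyz
        have h4 := S.hGconn.dist_triangle (u := S.x) (v := y) (w := z)
        have h5 := S.hGconn.dist_triangle (u := S.x) (v := z) (w := y)
        rw [SimpleGraph.dist_comm (u := z) (v := y)] at h5
        omega
      · simp [h2]
    · simp [h1]
  · simp [hyz]

theorem TSetup.tri2 (i j : ℕ) (h : i + 1 < j ∨ j + 1 < i) :
    S.E i * S.Astar * S.E j = 0 := by
  by_cases hi : i ≤ S.D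
  swap
  · rw [S.hEzero i (by omega), zero_mul, zero_mul]
  by_cases hj : j ≤ S.D
  swap
  · rw [S.hEzero j (by omega), mul_zero]
  have hD := S.hD3
  have hAd : S.Astar = Matrix.diagonal (fun y => (Fintype.card X : ℂ) * S.E 1 S.x y) := by
    ext y z
    rw [S.hAstar, Matrix.diagonal_apply]
  have hEH : ∀ k, (S.E k)ᴴ = S.E k := by
    intro k
    have h1 := S.hEreal k
    have h2 := S.hEsymm k
    ext y z
    rw [Matrix.conjTranspose_apply]
    have h3 := congrFun (congrFun h1 z) y
    have h4 := congrFun (congrFun h2 y) z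
    rw [Matrix.transpose_apply] at h4
    rw [← h4]
    exact h3
  have hAH : S.Astarᴴ = S.Astar := by
    rw [hAd, Matrix.diagonal_conjTranspose]
    congr 1
    ext y
    have h3 := congrFun (congrFun (S.hEreal 1) S.x) y
    rw [Matrix.map_apply] at h3
    simp [h3]
  open scoped ComplexOrder in
  rw [← Matrix.trace_mul_conjTranspose_self_eq_zero_iff]
  have e1 : (S.E i * S.Astar * S.E j) * (S.E i * S.Astar * S.E j)ᴴ
      = S.E i * (S.Astar * S.E j * S.Astar * S.E i) := by
    rw [Matrix.conjTranspose_mul, Matrix.conjTranspose_mul, hEH, hEH, hAH]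
    have := S.E_idem j j
    rw [if_pos rfl] at this
    calc _ = S.E i * S.Astar * (S.E j * S.E j) * S.Astar * S.E i := by simp only [mul_assoc]
      _ = _ := by rw [this]; simp only [mul_assoc]
  rw [e1, Matrix.trace_mul_comm, mul_assoc _ (S.E i)]
  have hii := S.E_idem i i
  rw [if_pos rfl] at hii
  rw [hii]
  have e2 : Matrix.trace (S.Astar * S.E j * S.Astar * S.E i)
      = (Fintype.card X : ℂ) ^ 2 * (S.E 1 * Matrix.hadamard (S.E i) (S.E j) * S.E 1) S.x S.x := by
    rw [Matrix.trace, hAd]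
    simp only [Matrix.diag_apply]
    simp only [Matrix.mul_apply (N := S.E i), Matrix.mul_diagonal, Matrix.diagonal_mul]
    rw [Matrix.mul_apply, Finset.mul_sum, Finset.sum_comm]
    refine Finset.sum_congr rfl fun z _ => ?_
    rw [Matrix.mul_apply, Finset.sum_mul, Finset.mul_sum]
    refine Finset.sum_congr rfl fun y _ => ?_
    have s1 : S.E i z y = S.E i y z := congrFun (congrFun (S.hEsymm i) y) z
    have s2 : S.E 1 z S.x = S.E 1 S.x z := congrFun (congrFun (S.hEsymm 1) S.x) z
    rw [Matrix.hadamard_apply, s1, s2]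
    ring
  rw [e2, S.hKrein i j hi hj]
  have e3 : S.E 1 * ((Fintype.card X : ℂ)⁻¹ • ∑ h ∈ Finset.range (S.D + 1),
      (S.q h i j : ℂ) • S.E h) * S.E 1 = 0 := by
    rw [mul_smul_comm, Finset.mul_sum, Finset.sum_eq_zero, smul_zero, zero_mul]
    intro k hk
    rw [mul_smul_comm, S.E_idem]
    split_ifs with h1
    · rw [← h1, S.hQpoly0 1 i j (by omega) hi hj (by omega)]
      simp
    · rw [smul_zero]
  rw [e3]
  simp

theorem TSetup.A_mem : S.A ∈ S.T := Algebra.subset_adjoin (by simp)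

theorem TSetup.Astar_mem : S.Astar ∈ S.T := Algebra.subset_adjoin (by simp)

theorem TSetup.E_mem (i : ℕ) : S.E i ∈ S.T := by
  by_cases hi : i ≤ S.D
  · exact idem_mem S.D S.E S.A S.θ S.hEsum S.E_idem S.hθinj S.hAspec _ S.A_mem i hi
  · rw [S.hEzero i (by omega)]; exact zero_mem _

theorem TSetup.Estar_mem (i : ℕ) : S.Estar i ∈ S.T := by
  by_cases hi : i ≤ S.D
  · exact idem_mem S.D S.Estar S.Astar S.θstar S.Estar_sum S.Estar_idem S.hθstarinj
      S.hAstarspec _ S.Astar_mem i hi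
  · rw [S.hEstarzero i (by omega)]; exact zero_mem _

variable {S} (M : TMod S)

/-- The representation of `T` on `W`. -/
def TMod.rho : S.T →+* Module.End ℂ M.W where
  toFun B := (B : Matrix X X ℂ).mulVecLin.restrict (fun w hw => M.hWinv B B.2 w hw)
  map_one' := by ext w : 2; simp
  map_mul' B C := LinearMap.ext fun w => Subtype.ext (Matrix.mulVec_mulVec _ _ _).symm
  map_zero' := by ext w : 2; simp [LinearMap.restrict_apply]
  map_add' B C := LinearMap.ext fun w => Subtype.ext (Matrix.add_mulVec _ _ _)

theorem TMod.rho_apply (B : S.T) (w : M.W) :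
    ((M.rho B w : M.W) : X → ℂ) = (B : Matrix X X ℂ) *ᵥ (w : X → ℂ) := rfl

theorem TMod.rho_eq_zero (B : S.T) :
    M.rho B = 0 ↔ ∀ w ∈ M.W, (B : Matrix X X ℂ) *ᵥ w = 0 := by
  constructor
  · intro h w hw
    rw [← M.rho_apply B ⟨w, hw⟩, h]; rfl
  · intro h
    ext w : 2
    rw [M.rho_apply, h _ w.2]; rfl

theorem TMod.range_map (B : S.T) :
    (LinearMap.range (M.rho B)).map M.W.subtype = M.W.map (B : Matrix X X ℂ).mulVecLin := by
  ext v
  simp only [Submodule.mem_map, LinearMap.mem_range]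
  constructor
  · rintro ⟨_, ⟨w, rfl⟩, rfl⟩
    exact ⟨w, w.2, rfl⟩
  · rintro ⟨w, hw, rfl⟩
    exact ⟨_, ⟨⟨w, hw⟩, rfl⟩, rfl⟩

theorem map_subtype_eq_bot (W : Submodule ℂ (X → ℂ)) (U : Submodule ℂ W) :
    U.map W.subtype = ⊥ ↔ U = ⊥ := by
  rw [← (Submodule.map_injective_of_injective W.injective_subtype).eq_iff, Submodule.map_bot]

theorem TMod.rho_ne_zero (B : S.T) :
    M.rho B ≠ 0 ↔ M.W.map (B : Matrix X X ℂ).mulVecLin ≠ ⊥ := by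
  rw [← M.range_map, Ne, Ne, map_subtype_eq_bot,
    LinearMap.range_eq_bot]

theorem TMod.finrank_range (B : S.T) :
    Module.finrank ℂ (LinearMap.range (M.rho B))
      = Module.finrank ℂ (M.W.map (B : Matrix X X ℂ).mulVecLin) := by
  rw [← M.range_map]
  exact (LinearEquiv.finrank_eq
    (Submodule.equivMapOfInjective _ M.W.injective_subtype _))

/-- irreducibility in terms of the two generators -/
theorem TMod.irr (U : Submodule ℂ M.W) (h1 : ∀ w ∈ U, M.rho ⟨S.A, S.A_mem⟩ w ∈ U)
    (h2 : ∀ w ∈ U, M.rho ⟨S.Astar, S.Astar_mem⟩ w ∈ U) : U = ⊥ ∨ U = ⊤ := by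
  have key : ∀ B ∈ S.T, ∀ w ∈ U.map M.W.subtype, B *ᵥ w ∈ U.map M.W.subtype := by
    intro B hB
    induction hB using Algebra.adjoin_induction with
    | mem B hB =>
      rintro _ ⟨w, hw, rfl⟩
      rcases hB with rfl | hB
      · exact ⟨_, h1 w hw, rfl⟩
      · rw [Set.mem_singleton_iff] at hB
        subst hB
        exact ⟨_, h2 w hw, rfl⟩
    | algebraMap c =>
      intro w hw
      rw [Algebra.algebraMap_eq_smul_one, Matrix.smul_mulVec, Matrix.one_mulVec]
      exact Submodule.smul_mem _ _ hw
    | add B C _ _ hB hC =>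
      intro w hw
      rw [Matrix.add_mulVec]
      exact Submodule.add_mem _ (hB w hw) (hC w hw)
    | mul B C _ _ hB hC =>
      intro w hw
      rw [← Matrix.mulVec_mulVec]
      exact hB _ (hC w hw)
  rcases M.hWirr _ (Submodule.map_subtype_le _ _) key with h | h
  · left
    rwa [map_subtype_eq_bot] at h
  · right
    apply Submodule.map_injective_of_injective M.W.injective_subtype
    rw [h, Submodule.map_subtype_top]

theorem TMod.sum_inv (F : ℕ → Matrix X X ℂ) (hF : ∀ i, F i ∈ S.T) (D : ℕ) (θ : ℕ → ℝ)
    (B : Matrix X X ℂ) (hBT : B ∈ S.T)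
    (hB : B = ∑ i ∈ Finset.range (D + 1), (θ i : ℂ) • F i)
    (U : Submodule ℂ M.W) (h : ∀ i, ∀ w ∈ U, M.rho ⟨F i, hF i⟩ w ∈ U) :
    ∀ w ∈ U, M.rho ⟨B, hBT⟩ w ∈ U := by
  intro w hw
  have : M.rho ⟨B, hBT⟩ w = ∑ i ∈ Finset.range (D + 1), (θ i : ℂ) • M.rho ⟨F i, hF i⟩ w := by
    apply Subtype.ext
    rw [M.rho_apply]
    simp only [hB, Matrix.sum_mulVec, Matrix.smul_mulVec, AddSubmonoidClass.coe_finsetSum,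
      Submodule.coe_smul, M.rho_apply]
  rw [this]
  exact Submodule.sum_mem _ fun i _ => Submodule.smul_mem _ _ (h i w hw)

theorem TMod.triStar : TriSys S.D M.r M.d (fun i => M.rho ⟨S.Estar i, S.Estar_mem i⟩)
    (M.rho ⟨S.A, S.A_mem⟩) where
  sum := by
    rw [← map_sum, ← map_one M.rho]
    congr 1
    apply Subtype.ext
    simp [S.Estar_sum]
  idem i j := by
    rw [← map_mul]
    split_ifs with h
    · congr 1
      apply Subtype.ext
      simp [S.Estar_idem, h]
    · rw [← map_zero M.rho]
      congr 1
      apply Subtype.ext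
      simp [S.Estar_idem, h]
  ne i := by rw [M.rho_ne_zero]; exact M.hr i
  tri i j h := by
    rw [← map_mul, ← map_mul, ← map_zero M.rho]
    congr 1
    apply Subtype.ext
    exact S.tri1 i j h
  irr U h1 h2 := M.irr U h1 (M.sum_inv S.Estar S.Estar_mem S.D S.θstar S.Astar S.Astar_mem
    S.hAstarspec U h2)

theorem TMod.triE : TriSys S.D M.t M.d (fun i => M.rho ⟨S.E i, S.E_mem i⟩)
    (M.rho ⟨S.Astar, S.Astar_mem⟩) where
  sum := by
    rw [← map_sum, ← map_one M.rho]
    congr 1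
    apply Subtype.ext
    simp [S.hEsum]
  idem i j := by
    rw [← map_mul]
    split_ifs with h
    · congr 1
      apply Subtype.ext
      simp [S.E_idem, h]
    · rw [← map_zero M.rho]
      congr 1
      apply Subtype.ext
      simp [S.E_idem, h]
  ne i := by rw [M.rho_ne_zero]; exact M.ht i
  tri i j h := by
    rw [← map_mul, ← map_mul, ← map_zero M.rho]
    congr 1
    apply Subtype.ext
    exact S.tri2 i j h
  irr U h1 h2 := M.irr U (M.sum_inv S.E S.E_mem S.D S.θ S.A S.A_mem S.hAspec U h2) h1

end setup

/-- For `0 ≤ h,i,j ≤ d`, the restriction of `E*_{r+i} A^h E*_{r+j}` to `W` is zero if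
`h < |i-j|` and nonzero if `h = |i-j|`; likewise for `E_{t+i} (A*)^h E_{t+j}`. -/
theorem stmt0 (S : TSetup X) (M : TMod S) (hd : 0 < M.d) :
    ∀ h i j : ℕ, h ≤ M.d → i ≤ M.d → j ≤ M.d →
      ((h < Nat.dist i j →
          ∀ w ∈ M.W, (S.Estar (M.r + i) * S.A ^ h * S.Estar (M.r + j)) *ᵥ w = 0) ∧
        (h = Nat.dist i j →
          ∃ w ∈ M.W, (S.Estar (M.r + i) * S.A ^ h * S.Estar (M.r + j)) *ᵥ w ≠ 0)) ∧
      ((h < Nat.dist i j →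
          ∀ w ∈ M.W, (S.E (M.t + i) * S.Astar ^ h * S.E (M.t + j)) *ᵥ w = 0) ∧
        (h = Nat.dist i j →
          ∃ w ∈ M.W, (S.E (M.t + i) * S.Astar ^ h * S.E (M.t + j)) *ᵥ w ≠ 0)) := by
  intro h i j _ hi hj
  have hthin : ∀ i, Module.finrank ℂ (LinearMap.range (M.rho ⟨S.Estar i, S.Estar_mem i⟩)) ≤ 1 := by
    intro i
    rw [M.finrank_range]
    exact M.hthin i
  have h1 := M.triStar.main hthin h i j hi hj
  have h2 := M.triE.main (M.triStar.dual_thin M.triE hthin) h i j hi hj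
  simp only [← map_mul, ← map_pow, Ne, M.rho_eq_zero] at h1 h2
  refine ⟨⟨h1.1, fun hh => ?_⟩, ⟨h2.1, fun hh => ?_⟩⟩
  · have := h1.2 hh
    push Not at this
    exact this
  · have := h2.2 hh
    push Not at this
    exact this
end
end

section
/- The restrictions of A and A* to W generate the ℂ-algebra End(W) of all ℂ-linear transformations from W to W; moreover, the restrictions of A and E*_r generate End(W), and the restrictions of A* and E_t generate End(W). -/
open Matrix
open scoped Classical

noncomputable section

variable {X : Type*} [Fintype X] [DecidableEq X]

/-- Orthogonal idempotents are polynomials in a generic linear combination of them. -/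
theorem aux_idem_mem {R : Type*} [Ring R] [Algebra ℂ R] (n : ℕ) (e : ℕ → R) (θ : ℕ → ℂ)
    (he : ∀ i j : ℕ, e i * e j = if i = j then e i else 0)
    (hsum : ∑ i ∈ Finset.range (n + 1), e i = 1)
    (hinj : ∀ i j : ℕ, i ≤ n → j ≤ n → θ i = θ j → i = j)
    (a : R) (ha : a = ∑ i ∈ Finset.range (n + 1), θ i • e i) (i : ℕ) (hi : i ≤ n) :
    e i ∈ Algebra.adjoin ℂ ({a} : Set R) := by
  have hae : ∀ j ∈ Finset.range (n + 1), a * e j = θ j • e j := by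
    intro j hj
    rw [ha, Finset.sum_mul]
    simp only [smul_mul_assoc, he]
    rw [Finset.sum_eq_single j]
    · simp
    · intro b _ hb; simp [hb]
    · intro h; exact absurd hj h
  have hp : ∀ p : Polynomial ℂ, ∀ j ∈ Finset.range (n + 1),
      Polynomial.aeval a p * e j = (p.eval (θ j)) • e j := by
    intro p j hj
    induction p using Polynomial.induction_on with
    | C c => simp [Algebra.smul_def]
    | add p q hp hq => simp [add_mul, add_smul, hp, hq]
    | monomial k c h =>
      rw [pow_succ, ← mul_assoc, map_mul, Polynomial.aeval_X, mul_assoc, hae j hj,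
        mul_smul_comm, h, smul_smul]
      congr 1
      simp only [Polynomial.eval_mul, Polynomial.eval_X]
      ring
  have key : Polynomial.aeval a (Lagrange.basis (Finset.range (n + 1)) θ i) = e i := by
    rw [← mul_one (Polynomial.aeval a _), ← hsum, Finset.mul_sum,
      Finset.sum_congr rfl (hp _), Finset.sum_eq_single i]
    · rw [Lagrange.eval_basis_self]
      · simp
      · intro x hx y hy hxy
        simp at hx hy
        exact hinj x y (by omega) (by omega) hxy
      · simp; omega
    · intro j hj hji
      rw [Lagrange.eval_basis_of_ne (Ne.symm hji) hj, zero_smul]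
    · intro h; exact absurd (by simp; omega) h
  rw [← key]
  exact Polynomial.aeval_mem_adjoin_singleton ℂ a

/-- An irreducible algebra of endomorphisms with a rank one element is everything. -/
theorem aux_burnside {V : Type*} [AddCommGroup V] [Module ℂ V] [FiniteDimensional ℂ V]
    (S : Subalgebra ℂ (Module.End ℂ V))
    (hirr : ∀ U : Submodule ℂ V, (∀ a ∈ S, ∀ u ∈ U, a u ∈ U) → U = ⊥ ∨ U = ⊤)
    (P : Module.End ℂ V) (hP : P ∈ S) (w0 : V) (hw0 : P w0 ≠ 0)
    (h1 : ∀ w, ∃ c : ℂ, P w = c • P w0) : S = ⊤ := by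
  obtain ⟨g, hg⟩ : ∃ g : Module.Dual ℂ V, g (P w0) = 1 := by
    obtain ⟨g, hg⟩ := Module.Projective.exists_dual_ne_zero ℂ hw0
    exact ⟨(g (P w0))⁻¹ • g, by simp [hg]⟩
  have hPg : ∀ w, P w = g (P w) • P w0 := by
    intro w
    obtain ⟨c, hc⟩ := h1 w
    rw [hc]; simp [hg]
  -- every vector is `b (P w0)`
  have hcyc : ∀ w, ∃ b ∈ S, b (P w0) = w := by
    let U : Submodule ℂ V := (Subalgebra.toSubmodule S).map (LinearMap.applyₗ (P w0))
    have hU := hirr U (by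
      rintro a ha _ ⟨b, hb, rfl⟩
      exact ⟨a * b, S.mul_mem ha hb, rfl⟩)
    rcases hU with hU | hU
    · exfalso
      have : P w0 ∈ U := ⟨1, S.one_mem, rfl⟩
      rw [hU] at this
      exact hw0 (by simpa using this)
    · intro w
      have : w ∈ U := by rw [hU]; trivial
      obtain ⟨b, hb, h⟩ := this
      exact ⟨b, hb, h⟩
  let Φ : Submodule ℂ (Module.Dual ℂ V) :=
    { carrier := {f | ∀ w : V, f.smulRight w ∈ S}
      zero_mem' := by
        intro w
        have : (0 : Module.Dual ℂ V).smulRight w = 0 := by ext; simp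
        rw [this]; exact S.zero_mem
      add_mem' := by
        intro f f' hf hf' w
        have : (f + f').smulRight w = f.smulRight w + f'.smulRight w := by
          ext; simp [add_smul]
        rw [this]; exact S.add_mem (hf w) (hf' w)
      smul_mem' := by
        intro c f hf w
        have : (c • f).smulRight w = c • f.smulRight w := by
          ext; simp [mul_smul]
        rw [this]; exact S.smul_mem (hf w) c }
  have hΦmem : ∀ a ∈ S, (g ∘ₗ P ∘ₗ a) ∈ Φ := by
    intro a ha w
    obtain ⟨b, hb, hbw⟩ := hcyc w
    have : (g ∘ₗ P ∘ₗ a).smulRight w = b * P * a := by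
      ext u
      simp only [LinearMap.smulRight_apply, LinearMap.comp_apply, Module.End.mul_apply]
      conv_rhs => rw [hPg (a u)]
      rw [map_smul, hbw]
    rw [this]
    exact S.mul_mem (S.mul_mem hb hP) ha
  have hco : Φ.dualCoannihilator = ⊥ := by
    let U : Submodule ℂ V :=
      { carrier := {w | ∀ a ∈ S, P (a w) = 0}
        zero_mem' := by intro a _; simp
        add_mem' := by intro u w hu hw a ha; simp [hu a ha, hw a ha]
        smul_mem' := by intro c u hu a ha; simp [hu a ha] }
    have hU := hirr U (by
      intro a ha u hu b hb
      exact hu (b * a) (S.mul_mem hb ha))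
    have hUbot : U = ⊥ := by
      rcases hU with hU | hU
      · exact hU
      · exfalso
        have : w0 ∈ U := by rw [hU]; trivial
        exact hw0 (this 1 S.one_mem)
    rw [eq_bot_iff, ← hUbot]
    intro w hw a ha
    rw [Submodule.mem_dualCoannihilator] at hw
    have := hw _ (hΦmem a ha)
    rw [hPg (a w)]
    simp only [LinearMap.comp_apply] at this
    rw [this, zero_smul]
  have hΦ : Φ = ⊤ := by
    rw [← Subspace.dualCoannihilator_dualAnnihilator_eq (W := Φ), hco]
    exact Submodule.dualAnnihilator_bot
  rw [eq_top_iff]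
  intro T _
  let b := Module.finBasis ℂ V
  have hT : T = ∑ i, (b.coord i).smulRight (T (b i)) := by
    refine b.ext fun j => ?_
    simp [LinearMap.sum_apply, Finsupp.single_apply, Finset.sum_ite_eq]
  rw [hT]
  refine S.sum_mem fun i _ => ?_
  have : b.coord i ∈ Φ := by rw [hΦ]; trivial
  exact this _

/-- The abstract tridiagonal argument. -/
theorem aux_tridiag {V : Type*} [AddCommGroup V] [Module ℂ V] [FiniteDimensional ℂ V]
    (n r d : ℕ) (A B : Module.End ℂ V) (P : ℕ → Module.End ℂ V)
    (hPP : ∀ i j : ℕ, P i * P j = if i = j then P i else 0)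
    (hsum : ∑ i ∈ Finset.range (n + 1), P i = 1)
    (htri : ∀ i j : ℕ, (i + 1 < j ∨ j + 1 < i) → P i * A * P j = 0)
    (hB : ∀ j, ∃ c : ℂ, P j * B = c • P j)
    (hirr : ∀ U : Submodule ℂ V, (∀ u ∈ U, A u ∈ U) → (∀ u ∈ U, B u ∈ U) → U = ⊥ ∨ U = ⊤)
    (hr : ∀ i, P i ≠ 0 ↔ r ≤ i ∧ i ≤ r + d)
    (hthin : ∀ i u w, P i u ≠ 0 → ∃ c : ℂ, P i w = c • P i u) :
    Algebra.adjoin ℂ ({A, P r} : Set (Module.End ℂ V)) = ⊤ := by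
  have hdec : ∀ w, w = ∑ i ∈ Finset.range (n + 1), P i w := by
    intro w
    rw [← LinearMap.sum_apply, hsum]; rfl
  have hPP' : ∀ i j w, P i (P j w) = if i = j then P i w else 0 := by
    intro i j w
    have := congrArg (fun f => f w) (hPP i j)
    simp only [Module.End.mul_apply] at this
    rw [this]; split_ifs <;> rfl
  have htri' : ∀ i j w, (i + 1 < j ∨ j + 1 < i) → P i (A (P j w)) = 0 := by
    intro i j w h
    exact congrArg (fun f => f w) (htri i j h)
  -- invariant coordinate subspaces
  have hblock : ∀ s : ℕ → Prop, (∀ j k, s k → ¬ s j → ∀ w, P j (A (P k w)) = 0) →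
      (∃ i, s i ∧ P i ≠ 0) → (∃ i, ¬ s i ∧ P i ≠ 0) → False := by
    rintro s hs ⟨i, hi, hPi⟩ ⟨j, hj, hPj⟩
    let K : Submodule ℂ V :=
      { carrier := {w | ∀ j, ¬ s j → P j w = 0}
        zero_mem' := by intro a _; simp
        add_mem' := by intro u w hu hw a ha; simp [hu a ha, hw a ha]
        smul_mem' := by intro c u hu a ha; simp [hu a ha] }
    have hK := hirr K (by
      intro u hu j hj
      rw [hdec u, map_sum, map_sum]
      refine Finset.sum_eq_zero fun k _ => ?_
      by_cases hk : s k
      · exact hs j k hk hj u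
      · rw [hu k hk]; simp) (by
      intro u hu j hj
      obtain ⟨c, hc⟩ := hB j
      have := congrArg (fun f => f u) hc
      simp only [Module.End.mul_apply, LinearMap.smul_apply] at this
      rw [this, hu j hj, smul_zero])
    rcases hK with hK | hK
    · apply hPi
      ext w
      have : P i w ∈ K := by
        intro k hk
        rw [hPP', if_neg]
        rintro rfl; exact hk hi
      rw [hK] at this
      simpa using this
    · apply hPj
      ext w
      have : w ∈ K := by rw [hK]; trivial
      exact this j hj
  have hup : ∀ i, r ≤ i → i < r + d → ∃ w, P (i + 1) (A (P i w)) ≠ 0 := by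
    intro i h1 h2
    by_contra! hcon
    refine hblock (fun j => j ≤ i) ?_ ⟨r, h1, (hr r).2 (by omega)⟩
      ⟨i + 1, by omega, (hr _).2 (by omega)⟩
    intro j k hk hj w
    by_cases h : k + 1 < j
    · exact htri' _ _ _ (Or.inr h)
    · have h3 : k = i := by omega
      have h4 : j = i + 1 := by omega
      subst h3 h4
      exact hcon w
  have hdown : ∀ i, r ≤ i → i < r + d → ∃ w, P i (A (P (i + 1) w)) ≠ 0 := by
    intro i h1 h2
    by_contra! hcon
    refine hblock (fun j => i < j) ?_ ⟨i + 1, by omega, (hr _).2 (by omega)⟩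
      ⟨r, by omega, (hr r).2 (by omega)⟩
    intro j k hk hj w
    by_cases h : j + 1 < k
    · exact htri' _ _ _ (Or.inl h)
    · have h3 : j = i := by omega
      have h4 : k = i + 1 := by omega
      subst h3 h4
      exact hcon w
  have hPr : ∃ w0, P r w0 ≠ 0 := by
    have := (hr r).2 (by omega)
    by_contra! h
    exact this (by ext w; simpa using h w)
  obtain ⟨w0, hw0⟩ := hPr
  have hAm : A ∈ Algebra.adjoin ℂ ({A, P r} : Set (Module.End ℂ V)) :=
    Algebra.subset_adjoin (by simp)
  have hPm : P r ∈ Algebra.adjoin ℂ ({A, P r} : Set (Module.End ℂ V)) :=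
    Algebra.subset_adjoin (by simp)
  refine aux_burnside _ ?_ (P r) hPm w0 hw0 (fun w => hthin r w0 w hw0)
  intro U hU
  have hUA : ∀ u ∈ U, A u ∈ U := hU A hAm
  have hUP : ∀ u ∈ U, P r u ∈ U := hU _ hPm
  by_cases hbot : U = ⊥
  · exact Or.inl hbot
  right
  have hdesc : ∀ i, (∃ u ∈ U, P i u ≠ 0) → ∃ u ∈ U, P r u ≠ 0 := by
    intro i
    induction i using Nat.strong_induction_on with
    | _ i ih =>
      rintro ⟨u, hu, hiu⟩
      have hi := (hr i).1 (fun h => hiu (by rw [h]; rfl))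
      rcases Nat.eq_or_lt_of_le hi.1 with h | h
      · subst h; exact ⟨u, hu, hiu⟩
      by_cases hj : ∃ j < i, P j u ≠ 0
      · obtain ⟨j, hj, hju⟩ := hj
        exact ih j hj ⟨u, hu, hju⟩
      push Not at hj
      obtain ⟨k, rfl⟩ : ∃ k, i = k + 1 := ⟨i - 1, by omega⟩
      refine ih k (by omega) ⟨A u, hUA u hu, ?_⟩
      obtain ⟨w, hw⟩ := hdown k (by omega) (by omega)
      obtain ⟨c, hc⟩ := hthin (k + 1) u w hiu
      have hs : P k (A u) = P k (A (P (k + 1) u)) := by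
        conv_lhs => rw [hdec u, map_sum, map_sum]
        refine Finset.sum_eq_single (k + 1) ?_ ?_
        · intro j _ hjk
          rcases lt_or_gt_of_ne hjk with h' | h'
          · rw [hj j h']; simp
          · exact htri' _ _ _ (Or.inl h')
        · intro hk
          have : k + 1 ∈ Finset.range (n + 1) := by
            by_contra hk'
            apply hiu
            rw [hdec u, map_sum]
            refine Finset.sum_eq_zero fun j hj' => ?_
            rw [hPP', if_neg]
            rintro rfl; exact hk' hj'
          exact absurd this hk
      rw [hs]
      intro h0
      apply hw
      rw [hc, map_smul, map_smul, h0, smul_zero]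
  obtain ⟨u, hu, hru⟩ : ∃ u ∈ U, P r u ≠ 0 := by
    obtain ⟨u, hu, hu0⟩ := (Submodule.ne_bot_iff U).1 hbot
    by_contra! hcon
    apply hu0
    rw [hdec u]
    refine Finset.sum_eq_zero fun i _ => ?_
    by_contra hi
    obtain ⟨v, hv, hv'⟩ := hdesc i ⟨u, hu, hi⟩
    exact hv' (hcon v hv)
  have hall : ∀ k, ∀ i, i ≤ r + k → ∀ w, P i w ∈ U := by
    have hz : ∀ i, ¬ (r ≤ i ∧ i ≤ r + d) → ∀ w, P i w ∈ U := by
      intro i hi w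
      have : P i = 0 := by
        by_contra h; exact hi ((hr i).1 h)
      rw [this]; exact U.zero_mem
    intro k
    induction k with
    | zero =>
      intro i hi w
      by_cases h : i = r
      · subst h
        obtain ⟨c, hc⟩ := hthin i u w hru
        rw [hc]; exact U.smul_mem _ (hUP u hu)
      · exact hz i (by omega) w
    | succ k ih =>
      intro i hi w
      by_cases h : i ≤ r + k
      · exact ih i h w
      by_cases h2 : r ≤ i ∧ i ≤ r + d
      swap
      · exact hz i h2 w
      have h3 : i = r + k + 1 := by omega
      subst h3
      obtain ⟨v, hv⟩ := hup (r + k) (by omega) (by omega)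
      obtain ⟨c, hc⟩ := hthin (r + k + 1) _ w hv
      rw [hc]
      refine U.smul_mem _ ?_
      have hmem : A (P (r + k) v) ∈ U := hUA _ (ih _ le_rfl v)
      have hin : r + k + 1 ∈ Finset.range (n + 1) := by
        by_contra hk'
        apply hv
        rw [hdec (A (P (r + k) v)), map_sum]
        refine Finset.sum_eq_zero fun j hj' => ?_
        rw [hPP', if_neg]
        rintro rfl; exact hk' hj'
      have := hdec (A (P (r + k) v))
      rw [← Finset.add_sum_erase _ _ hin] at this
      rw [← sub_eq_iff_eq_add] at this
      rw [← this]
      refine U.sub_mem hmem (U.sum_mem fun j hj => ?_)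
      simp only [Finset.mem_erase, Finset.mem_range] at hj
      by_cases hjk : j ≤ r + k
      · exact ih j hjk _
      · rw [htri' _ _ _ (Or.inr (by omega))]; exact U.zero_mem
  rw [eq_top_iff]
  intro w _
  rw [hdec w]
  exact U.sum_mem fun i _ => hall i i (by omega) w

theorem aux_Estar_diag (S : TSetup X) (i : ℕ) :
    S.Estar i = Matrix.diagonal (fun y => if S.G.dist S.x y = i then (1 : ℂ) else 0) := by
  ext y z
  by_cases hi : i ≤ S.D
  · rw [S.hEstar i hi, Matrix.diagonal_apply]
    by_cases h : y = z <;> simp [h]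
  · have h2 : ¬ S.G.dist S.x y = i := by
      intro h
      have := S.hDiamLe S.x y
      omega
    rw [S.hEstarzero i (by omega), Matrix.diagonal_apply]
    simp [h2]

theorem aux_Estar_idem (S : TSetup X) (i j : ℕ) :
    S.Estar i * S.Estar j = if i = j then S.Estar i else 0 := by
  simp only [aux_Estar_diag, Matrix.diagonal_mul_diagonal]
  split_ifs with h
  · subst h; congr 1; ext y; split_ifs <;> simp
  · rw [← Matrix.diagonal_zero]
    congr 1; ext y; split_ifs <;> first | omega | simp

theorem aux_Estar_sum (S : TSetup X) : ∑ i ∈ Finset.range (S.D + 1), S.Estar i = 1 := by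
  ext y z
  rw [Matrix.sum_apply]
  simp only [aux_Estar_diag, Matrix.diagonal_apply, Matrix.one_apply]
  by_cases h : y = z
  · have := S.hDiamLe S.x y
    simp only [h, if_true]
    subst h
    rw [Finset.sum_ite_eq, if_pos]
    simp; omega
  · simp [h]

theorem aux_E_idem (S : TSetup X) (i j : ℕ) :
    S.E i * S.E j = if i = j then S.E i else 0 := by
  by_cases hi : i ≤ S.D
  · by_cases hj : j ≤ S.D
    · exact S.hEidem i j hi hj
    · rw [S.hEzero j (by omega), mul_zero, if_neg (by omega)]
  · rw [S.hEzero i (by omega), zero_mul]; simp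

theorem aux_A_mem (S : TSetup X) : S.A ∈ S.T := Algebra.subset_adjoin (by simp)

theorem aux_Astar_mem (S : TSetup X) : S.Astar ∈ S.T := Algebra.subset_adjoin (by simp)

theorem aux_E_mem (S : TSetup X) (i : ℕ) : S.E i ∈ S.T := by
  by_cases hi : i ≤ S.D
  · have := aux_idem_mem S.D S.E (fun i => (S.θ i : ℂ)) (aux_E_idem S) S.hEsum
      (fun i j hi hj h => S.hθinj i j hi hj (by exact_mod_cast h)) S.A S.hAspec i hi
    exact Algebra.adjoin_mono (by simp) this
  · rw [S.hEzero i (by omega)]; exact S.T.zero_mem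

theorem aux_Estar_mem (S : TSetup X) (i : ℕ) : S.Estar i ∈ S.T := by
  by_cases hi : i ≤ S.D
  · have := aux_idem_mem S.D S.Estar (fun i => (S.θstar i : ℂ)) (aux_Estar_idem S)
      (aux_Estar_sum S)
      (fun i j hi hj h => S.hθstarinj i j hi hj (by exact_mod_cast h)) S.Astar S.hAstarspec i hi
    exact Algebra.adjoin_mono (by simp) this
  · rw [S.hEstarzero i (by omega)]; exact S.T.zero_mem

/-- `A` is tridiagonal with respect to the `E*_i`. -/
theorem aux_tri (S : TSetup X) (i j : ℕ) (h : i + 1 < j ∨ j + 1 < i) :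
    S.Estar i * S.A * S.Estar j = 0 := by
  ext y z
  rw [aux_Estar_diag, aux_Estar_diag, Matrix.mul_diagonal, Matrix.diagonal_mul, S.hA]
  by_cases hyz : S.G.Adj y z
  · have h1 := S.hGconn.dist_triangle (u := S.x) (v := y) (w := z)
    have h2 := S.hGconn.dist_triangle (u := S.x) (v := z) (w := y)
    rw [SimpleGraph.dist_eq_one_iff_adj.2 hyz] at h1
    rw [SimpleGraph.dist_eq_one_iff_adj.2 hyz.symm] at h2
    split_ifs <;> first | omega | simp
  · simp [hyz]

open scoped ComplexOrder in
/-- `A*` is tridiagonal with respect to the `E_i`. -/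
theorem aux_tri_star (S : TSetup X) (i j : ℕ) (h : i + 1 < j ∨ j + 1 < i) :
    S.E i * S.Astar * S.E j = 0 := by
  by_cases hi : i ≤ S.D
  swap
  · rw [S.hEzero i (by omega)]; simp
  by_cases hj : j ≤ S.D
  swap
  · rw [S.hEzero j (by omega)]; simp
  have hD := S.hD3
  have hEH : ∀ k, (S.E k)ᴴ = S.E k := by
    intro k
    have h1 := S.hEreal k
    have h2 := S.hEsymm k
    rw [Matrix.conjTranspose, h2]
    exact h1
  have hsym : ∀ k y z, S.E k y z = S.E k z y := by
    intro k y z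
    exact congrFun (congrFun (S.hEsymm k) z) y
  have hAd : S.Astar = Matrix.diagonal (fun y => (Fintype.card X : ℂ) * S.E 1 S.x y) := by
    ext y z
    rw [S.hAstar, Matrix.diagonal_apply]
  have hAH : S.Astarᴴ = S.Astar := by
    rw [hAd, Matrix.diagonal_conjTranspose]
    congr 1
    ext y
    have := congrFun (congrFun (S.hEreal 1) S.x) y
    simp only [Matrix.map_apply] at this
    simp [this]
  rw [← Matrix.trace_mul_conjTranspose_self_eq_zero_iff]
  rw [Matrix.conjTranspose_mul, Matrix.conjTranspose_mul, hEH, hEH, hAH]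
  have e1 : S.E i * S.Astar * S.E j * (S.E j * (S.Astar * S.E i))
      = S.E i * (S.Astar * S.E j * S.Astar * S.E i) := by
    have := S.hEidem j j hj hj
    rw [if_pos rfl] at this
    calc _ = S.E i * S.Astar * (S.E j * S.E j) * (S.Astar * S.E i) := by noncomm_ring
      _ = _ := by rw [this]; noncomm_ring
  have e2 : S.Astar * S.E j * S.Astar * S.E i * S.E i = S.Astar * S.E j * S.Astar * S.E i := by
    have := S.hEidem i i hi hi
    rw [if_pos rfl] at this
    rw [mul_assoc, this]
  rw [e1, Matrix.trace_mul_comm, e2]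
  have hq : S.q 1 j i = 0 := S.hQpoly0 1 j i (by omega) hj hi (by omega)
  have hK := S.hKrein j i hj hi
  have e3 : S.E 1 * Matrix.hadamard (S.E j) (S.E i) = 0 := by
    rw [hK, Matrix.mul_smul, Finset.mul_sum, Finset.sum_eq_zero, smul_zero]
    intro k hk
    rw [Matrix.mul_smul, aux_E_idem]
    split_ifs with h1
    · subst h1; simp [hq]
    · simp
  have e4 : Matrix.trace (S.Astar * S.E j * S.Astar * S.E i)
      = (Fintype.card X : ℂ) ^ 2 *
        (S.E 1 * Matrix.hadamard (S.E j) (S.E i) * S.E 1) S.x S.x := by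
    rw [hAd, Matrix.trace]
    simp only [Matrix.diag_apply, Matrix.mul_apply (M := _ * _) (N := S.E i),
      Matrix.mul_apply (M := S.E 1 * _) (N := S.E 1), Matrix.mul_diagonal, Matrix.diagonal_mul,
      Matrix.mul_apply (M := S.E 1) (N := Matrix.hadamard _ _), Matrix.hadamard_apply]
    rw [Finset.sum_comm, Finset.mul_sum]
    refine Finset.sum_congr rfl fun z _ => ?_
    rw [Finset.sum_mul, Finset.mul_sum]
    refine Finset.sum_congr rfl fun y _ => ?_
    rw [hsym i z y, hsym 1 z S.x]
    ring
  rw [e4, e3]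
  simp

theorem aux_act_apply (S : TSetup X) (M : TMod S) (B : Matrix X X ℂ) (hB : B ∈ S.T) (w : M.W) :
    ((actW S M B w : M.W) : X → ℂ) = B *ᵥ (w : X → ℂ) := by
  have h : ∀ w ∈ M.W, B.mulVecLin w ∈ M.W := fun w hw => M.hWinv B hB w hw
  rw [actW, dif_pos h]
  rfl

theorem aux_act_mul (S : TSetup X) (M : TMod S) (B C : Matrix X X ℂ) (hB : B ∈ S.T)
    (hC : C ∈ S.T) : actW S M (B * C) = actW S M B * actW S M C := by
  ext1 w
  apply Subtype.ext
  rw [aux_act_apply _ _ _ (S.T.mul_mem hB hC), Module.End.mul_apply, aux_act_apply _ _ _ hB,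
    aux_act_apply _ _ _ hC, Matrix.mulVec_mulVec]

theorem aux_act_zero (S : TSetup X) (M : TMod S) : actW S M 0 = 0 := by
  ext1 w
  apply Subtype.ext
  rw [aux_act_apply _ _ _ S.T.zero_mem]
  simp

theorem aux_act_one (S : TSetup X) (M : TMod S) : actW S M 1 = 1 := by
  ext1 w
  apply Subtype.ext
  rw [aux_act_apply _ _ _ S.T.one_mem]
  simp

theorem aux_act_smul (S : TSetup X) (M : TMod S) (c : ℂ) (B : Matrix X X ℂ) (hB : B ∈ S.T) :
    actW S M (c • B) = c • actW S M B := by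
  ext1 w
  apply Subtype.ext
  rw [aux_act_apply _ _ _ (S.T.smul_mem hB c), LinearMap.smul_apply, Submodule.coe_smul,
    aux_act_apply _ _ _ hB, Matrix.smul_mulVec]

theorem aux_act_sum (S : TSetup X) (M : TMod S) (s : Finset ℕ) (F : ℕ → Matrix X X ℂ)
    (hF : ∀ i, F i ∈ S.T) : actW S M (∑ i ∈ s, F i) = ∑ i ∈ s, actW S M (F i) := by
  ext1 w
  apply Subtype.ext
  rw [aux_act_apply _ _ _ (S.T.sum_mem fun i _ => hF i), LinearMap.sum_apply,
    Submodule.coe_sum, Matrix.sum_mulVec]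
  exact Finset.sum_congr rfl fun i _ => (aux_act_apply _ _ _ (hF i) w).symm

theorem aux_map_bot {V : Type*} [AddCommGroup V] [Module ℂ V] {W : Submodule ℂ V}
    (U : Submodule ℂ W) : U.map W.subtype = ⊥ ↔ U = ⊥ := by
  rw [← (Submodule.map_injective_of_injective W.injective_subtype).eq_iff, Submodule.map_bot]

theorem aux_range (S : TSetup X) (M : TMod S) (B : Matrix X X ℂ) (hB : B ∈ S.T) :
    (LinearMap.range (actW S M B)).map M.W.subtype = M.W.map B.mulVecLin := by
  ext v
  constructor
  · rintro ⟨_, ⟨w, rfl⟩, rfl⟩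
    exact ⟨w, w.2, (aux_act_apply _ _ _ hB w).symm⟩
  · rintro ⟨w, hw, rfl⟩
    exact ⟨_, ⟨⟨w, hw⟩, rfl⟩, aux_act_apply _ _ _ hB ⟨w, hw⟩⟩

theorem aux_finrank (S : TSetup X) (M : TMod S) (B : Matrix X X ℂ) (hB : B ∈ S.T) :
    Module.finrank ℂ (LinearMap.range (actW S M B)) =
      Module.finrank ℂ (M.W.map B.mulVecLin) := by
  rw [← aux_range S M B hB, Submodule.finrank_map_subtype_eq]

theorem aux_ne (S : TSetup X) (M : TMod S) (B : Matrix X X ℂ) (hB : B ∈ S.T) :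
    actW S M B ≠ 0 ↔ M.W.map B.mulVecLin ≠ ⊥ := by
  rw [← aux_range S M B hB, ne_eq, ne_eq, aux_map_bot, LinearMap.range_eq_bot]

theorem aux_act_family (S : TSetup X) (M : TMod S) (F : ℕ → Matrix X X ℂ)
    (hF : ∀ i, F i ∈ S.T) (hFF : ∀ i j, F i * F j = if i = j then F i else 0) (i j : ℕ) :
    actW S M (F i) * actW S M (F j) = if i = j then actW S M (F i) else 0 := by
  rw [← aux_act_mul _ _ _ _ (hF i) (hF j), hFF]
  split_ifs
  · rfl
  · exact aux_act_zero S M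

theorem aux_rank_sum {V : Type*} [AddCommGroup V] [Module ℂ V] [FiniteDimensional ℂ V]
    (n : ℕ) (P : ℕ → Module.End ℂ V)
    (hPP : ∀ i j : ℕ, P i * P j = if i = j then P i else 0)
    (hsum : ∑ i ∈ Finset.range (n + 1), P i = 1) :
    ∑ i ∈ Finset.range (n + 1), Module.finrank ℂ (LinearMap.range (P i)) =
      Module.finrank ℂ V := by
  have h := congrArg (LinearMap.trace ℂ V) hsum
  rw [map_sum, LinearMap.trace_one] at h
  have h2 : ∀ i, LinearMap.trace ℂ V (P i) = Module.finrank ℂ (LinearMap.range (P i)) := by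
    intro i
    refine LinearMap.IsProj.trace (p := LinearMap.range (P i)) ⟨fun w => ⟨w, rfl⟩, ?_⟩
    rintro _ ⟨w, rfl⟩
    have := congrArg (fun f => f w) (hPP i i)
    simpa using this
  simp only [h2] at h
  exact_mod_cast h

/-- Dual thinness. -/
theorem aux_thin_star (S : TSetup X) (M : TMod S) (i : ℕ) :
    Module.finrank ℂ (LinearMap.range (actW S M (S.E i))) ≤ 1 := by
  have h1 := aux_rank_sum S.D (fun i => actW S M (S.E i))
    (aux_act_family S M S.E (aux_E_mem S) (aux_E_idem S))
    (by rw [← aux_act_sum _ _ _ _ (aux_E_mem S), S.hEsum, aux_act_one])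
  have h2 := aux_rank_sum S.D (fun i => actW S M (S.Estar i))
    (aux_act_family S M S.Estar (aux_Estar_mem S) (aux_Estar_idem S))
    (by rw [← aux_act_sum _ _ _ _ (aux_Estar_mem S), aux_Estar_sum, aux_act_one])
  have h3 : ∑ i ∈ Finset.range (S.D + 1),
      Module.finrank ℂ (LinearMap.range (actW S M (S.Estar i))) ≤ M.d + 1 := by
    calc _ ≤ ∑ i ∈ Finset.range (S.D + 1), (if i ∈ Finset.Icc M.r (M.r + M.d) then 1 else 0) := by
          refine Finset.sum_le_sum fun i _ => ?_
          rw [aux_finrank _ _ _ (aux_Estar_mem S i)]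
          split_ifs with h
          · exact M.hthin i
          · have : M.W.map (S.Estar i).mulVecLin = ⊥ := by
              by_contra h'
              exact h (Finset.mem_Icc.2 ((M.hr i).1 h'))
            rw [this]; simp
      _ = (Finset.range (S.D + 1) ∩ Finset.Icc M.r (M.r + M.d)).card := by
          rw [Finset.sum_ite_mem]; simp
      _ ≤ (Finset.Icc M.r (M.r + M.d)).card := Finset.card_le_card Finset.inter_subset_right
      _ = M.d + 1 := by simp; omega
  have hpos : ∀ k ∈ Finset.Icc M.t (M.t + M.d),
      1 ≤ Module.finrank ℂ (LinearMap.range (actW S M (S.E k))) := by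
    intro k hk
    have := (aux_ne S M _ (aux_E_mem S k)).2 ((M.ht k).2 (Finset.mem_Icc.1 hk))
    rw [Nat.one_le_iff_ne_zero, ne_eq, Submodule.finrank_eq_zero, LinearMap.range_eq_bot]
    exact this
  have hsub : Finset.Icc M.t (M.t + M.d) ⊆ Finset.range (S.D + 1) := by
    intro k hk
    by_contra hk'
    have := (M.ht k).2 (Finset.mem_Icc.1 hk)
    apply this
    rw [S.hEzero k (by simp at hk'; omega)]
    simp
  by_contra! hi
  have hi' : i ∈ Finset.Icc M.t (M.t + M.d) := by
    rw [Finset.mem_Icc, ← M.ht, ← aux_ne S M _ (aux_E_mem S i)]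
    intro h
    rw [h, LinearMap.range_zero, finrank_bot] at hi
    omega
  have h4 : ∑ k ∈ Finset.Icc M.t (M.t + M.d), 1 <
      ∑ k ∈ Finset.Icc M.t (M.t + M.d),
        Module.finrank ℂ (LinearMap.range (actW S M (S.E k))) :=
    Finset.sum_lt_sum hpos ⟨i, hi', hi⟩
  have h5 := Finset.sum_le_sum_of_subset (f := fun k =>
        Module.finrank ℂ (LinearMap.range (actW S M (S.E k)))) hsub
  simp only [Finset.sum_const, Nat.card_Icc, smul_eq_mul, mul_one] at h4
  omega

theorem aux_thin {V : Type*} [AddCommGroup V] [Module ℂ V] [FiniteDimensional ℂ V]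
    (P : Module.End ℂ V) (h : Module.finrank ℂ (LinearMap.range P) ≤ 1) (u w : V)
    (hu : P u ≠ 0) : ∃ c : ℂ, P w = c • P u := by
  obtain ⟨v, hv⟩ := finrank_le_one_iff.1 h
  obtain ⟨a, ha⟩ := hv ⟨P u, u, rfl⟩
  obtain ⟨b, hb⟩ := hv ⟨P w, w, rfl⟩
  have ha' := congrArg Subtype.val ha
  have hb' := congrArg Subtype.val hb
  simp only [Submodule.coe_smul] at ha' hb'
  have ha0 : a ≠ 0 := by
    rintro rfl
    exact hu (by rw [← ha', zero_smul])
  refine ⟨b * a⁻¹, ?_⟩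
  rw [← ha', ← hb', smul_smul]
  congr 1
  field_simp

theorem aux_irr (S : TSetup X) (M : TMod S) (U : Submodule ℂ M.W)
    (hA : ∀ u ∈ U, actW S M S.A u ∈ U) (hB : ∀ u ∈ U, actW S M S.Astar u ∈ U) :
    U = ⊥ ∨ U = ⊤ := by
  have h := M.hWirr (U.map M.W.subtype) (Submodule.map_subtype_le _ _) (by
    intro B hB'
    induction hB' using Algebra.adjoin_induction with
    | mem C hC =>
      rintro _ ⟨u, hu, rfl⟩
      rcases hC with rfl | hC
      · exact ⟨_, hA u hu, aux_act_apply _ _ _ (aux_A_mem S) u⟩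
      · rw [Set.mem_singleton_iff] at hC
        subst hC
        exact ⟨_, hB u hu, aux_act_apply _ _ _ (aux_Astar_mem S) u⟩
    | algebraMap c =>
      intro w hw
      rw [Algebra.algebraMap_eq_smul_one, Matrix.smul_mulVec, Matrix.one_mulVec]
      exact Submodule.smul_mem _ _ hw
    | add C C' _ _ h h' =>
      intro w hw
      rw [Matrix.add_mulVec]
      exact Submodule.add_mem _ (h w hw) (h' w hw)
    | mul C C' _ _ h h' =>
      intro w hw
      rw [← Matrix.mulVec_mulVec]
      exact h _ (h' w hw))
  rcases h with h | h
  · left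
    exact (aux_map_bot U).1 h
  · right
    rw [eq_top_iff]
    intro w _
    have : (w : X → ℂ) ∈ U.map M.W.subtype := by rw [h]; exact w.2
    obtain ⟨u, hu, huw⟩ := this
    have : u = w := Subtype.ext huw
    rwa [← this]

theorem aux_spec (S : TSetup X) (M : TMod S) (n : ℕ) (F : ℕ → Matrix X X ℂ)
    (hF : ∀ i, F i ∈ S.T) (hz : ∀ i, n < i → F i = 0)
    (hFF : ∀ i j, F i * F j = if i = j then F i else 0)
    (θ : ℕ → ℂ) (B : Matrix X X ℂ) (hB : B ∈ S.T)
    (hspec : B = ∑ i ∈ Finset.range (n + 1), θ i • F i) (j : ℕ) :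
    ∃ c : ℂ, actW S M (F j) * actW S M B = c • actW S M (F j) := by
  refine ⟨θ j, ?_⟩
  rw [← aux_act_mul _ _ _ _ (hF j) hB, ← aux_act_smul _ _ _ _ (hF j)]
  congr 1
  rw [hspec, Finset.mul_sum, Finset.sum_eq_single j]
  · rw [Matrix.mul_smul, hFF, if_pos rfl]
  · intro i _ hij
    rw [Matrix.mul_smul, hFF, if_neg (Ne.symm hij), smul_zero]
  · intro hj
    rw [hz j (by simp at hj; omega)]; simp

/-- The restrictions of `A, A*` to `W` generate the algebra `End(W)`; so do the
restrictions of `A, E*_r`, and the restrictions of `A*, E_t`. -/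
theorem stmt2 (S : TSetup X) (M : TMod S) (hd : 0 < M.d) :
    Algebra.adjoin ℂ ({actW S M S.A, actW S M S.Astar} : Set (Module.End ℂ M.W)) = ⊤ ∧
    Algebra.adjoin ℂ ({actW S M S.A, actW S M (S.Estar M.r)} : Set (Module.End ℂ M.W)) = ⊤ ∧
    Algebra.adjoin ℂ ({actW S M S.Astar, actW S M (S.E M.t)} : Set (Module.End ℂ M.W)) = ⊤ := by
  have hEs := aux_Estar_mem S
  have hE := aux_E_mem S
  have hPPs := aux_act_family S M S.Estar hEs (aux_Estar_idem S)
  have hsums : ∑ i ∈ Finset.range (S.D + 1), actW S M (S.Estar i) = 1 := by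
    rw [← aux_act_sum _ _ _ _ hEs, aux_Estar_sum, aux_act_one]
  have hPP := aux_act_family S M S.E hE (aux_E_idem S)
  have hsum : ∑ i ∈ Finset.range (S.D + 1), actW S M (S.E i) = 1 := by
    rw [← aux_act_sum _ _ _ _ hE, S.hEsum, aux_act_one]
  have h2 : Algebra.adjoin ℂ
      ({actW S M S.A, actW S M (S.Estar M.r)} : Set (Module.End ℂ M.W)) = ⊤ := by
    refine aux_tridiag S.D M.r M.d (actW S M S.A) (actW S M S.Astar)
      (fun i => actW S M (S.Estar i)) hPPs hsums ?_ ?_ (aux_irr S M) ?_ ?_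
    · intro i j hij
      rw [← aux_act_mul _ _ _ _ (hEs i) (aux_A_mem S),
        ← aux_act_mul _ _ _ _ (S.T.mul_mem (hEs i) (aux_A_mem S)) (hEs j), aux_tri S i j hij,
        aux_act_zero]
    · exact aux_spec S M S.D S.Estar hEs S.hEstarzero (aux_Estar_idem S) _ _ (aux_Astar_mem S)
        S.hAstarspec
    · intro i
      rw [aux_ne S M _ (hEs i), M.hr]
    · intro i u w hu
      refine aux_thin _ ?_ u w hu
      rw [aux_finrank S M _ (hEs i)]
      exact M.hthin i
  have h3 : Algebra.adjoin ℂ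
      ({actW S M S.Astar, actW S M (S.E M.t)} : Set (Module.End ℂ M.W)) = ⊤ := by
    refine aux_tridiag S.D M.t M.d (actW S M S.Astar) (actW S M S.A)
      (fun i => actW S M (S.E i)) hPP hsum ?_ ?_ (fun U h h' => aux_irr S M U h' h) ?_ ?_
    · intro i j hij
      rw [← aux_act_mul _ _ _ _ (hE i) (aux_Astar_mem S),
        ← aux_act_mul _ _ _ _ (S.T.mul_mem (hE i) (aux_Astar_mem S)) (hE j),
        aux_tri_star S i j hij, aux_act_zero]
    · exact aux_spec S M S.D S.E hE S.hEzero (aux_E_idem S) _ _ (aux_A_mem S) S.hAspec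
    · intro i
      rw [aux_ne S M _ (hE i), M.ht]
    · intro i u w hu
      exact aux_thin _ (aux_thin_star S M i) u w hu
  refine ⟨?_, h2, h3⟩
  rw [eq_top_iff, ← h2]
  refine Algebra.adjoin_le ?_
  rintro _ (rfl | h)
  · exact Algebra.subset_adjoin (by simp)
  · rw [Set.mem_singleton_iff] at h
    subst h
    have hrD : M.r ≤ S.D := by
      by_contra hr
      apply (M.hr M.r).2 (by omega)
      rw [S.hEstarzero _ (by omega)]
      simp
    have := aux_idem_mem S.D (fun i => actW S M (S.Estar i)) (fun i => (S.θstar i : ℂ)) hPPs hsums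
      (fun i j hi hj h => S.hθstarinj i j hi hj (by exact_mod_cast h)) (actW S M S.Astar)
      (by
        conv_lhs => rw [S.hAstarspec]
        rw [aux_act_sum _ _ _ _ (fun i => S.T.smul_mem (hEs i) _)]
        exact Finset.sum_congr rfl fun i _ => aux_act_smul _ _ _ _ (hEs i)) M.r hrD
    exact Algebra.adjoin_mono (by simp) this
end
end
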